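/- Fix t > 0, x₀ ∈ ℝ, θ > 0, σ > 0. For each μ ∈ ℝ let γ_μ be the Gaussian probability measure on ℝ with mean m_t = x₀·e^{−θt} + μ·(1 − e^{−θt}) and variance σ_t² = (σ²/(2θ))·(1 − e^{−2θt}). Then there exists a family (Z_μ)_{μ∈ℝ} of pairwise disjoint Borel subsets of ℝ^ℕ such that γ_μ^ℕ(Z_μ) = 1 for every μ ∈ ℝ; that is, the family (γ_μ^ℕ)_{μ∈ℝ} is strictly separated. -/

import Mathlib

/-!
By the strong law of large numbers, the empirical means of a `γ_μ^ℕ`-random sequence converge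
almost surely to `m(μ) = x₀ e^{-θt} + μ (1 - e^{-θt})`. Let `Z μ` be the set of sequences whose
empirical means converge to `m(μ)`. Since `θ t > 0`, the map `m` is injective, so uniqueness of
limits makes the sets `Z μ` pairwise disjoint.
-/

open MeasureTheory ProbabilityTheory Filter Real

/-- `P` is the countable product measure `ν^ℕ` on `ℕ → ℝ` of the Borel probability
measure `ν` on `ℝ`: it is a probability measure whose finite-dimensional cylinder
marginals are products of `ν`. -/
def IsCountableProductOf (P : Measure (ℕ → ℝ)) (ν : Measure ℝ) : Prop :=
  IsProbabilityMeasure P ∧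
    ∀ (s : Finset ℕ) (B : ℕ → Set ℝ), (∀ i ∈ s, MeasurableSet (B i)) →
      P {z : ℕ → ℝ | ∀ i ∈ s, z i ∈ B i} = ∏ i ∈ s, ν (B i)

/-- `IsCountableProductOf` determines Mathlib's infinite product measure. -/
lemma IsCountableProductOf.eq_infinitePi {P : Measure (ℕ → ℝ)} {ν : Measure ℝ}
    [IsProbabilityMeasure ν] (h : IsCountableProductOf P ν) :
    P = Measure.infinitePi (fun _ : ℕ => ν) :=
  Measure.eq_infinitePi _ fun s B hB => h.2 s B fun i _ => hB i

lemma IsCountableProductOf.ae_tendsto_mean {P : Measure (ℕ → ℝ)} {ν : Measure ℝ}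
    [IsProbabilityMeasure ν] (hν : Integrable id ν) (h : IsCountableProductOf P ν) :
    ∀ᵐ z ∂P, Tendsto (fun n : ℕ => (∑ i ∈ Finset.range n, z i) / (n : ℝ)) atTop
      (nhds (∫ x, x ∂ν)) := by
  rw [h.eq_infinitePi]
  have hmp := fun i : ℕ => measurePreserving_eval_infinitePi (fun _ : ℕ => ν) i
  have hindep : iIndepFun (fun (i : ℕ) (z : ℕ → ℝ) => z i)
      (Measure.infinitePi (fun _ : ℕ => ν)) :=
    iIndepFun_infinitePi (X := fun _ x => x) (fun _ => measurable_id)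
  have hslln := strong_law_ae_real (μ := Measure.infinitePi (fun _ : ℕ => ν))
    (fun (i : ℕ) (z : ℕ → ℝ) => z i)
    ((hmp 0).integrable_comp_of_integrable hν)
    (fun i j hij => hindep.indepFun hij)
    (fun i => ⟨(hmp i).aemeasurable, (hmp 0).aemeasurable,
      (hmp i).map_eq.trans (hmp 0).map_eq.symm⟩)
  have hmean : ∫ z : ℕ → ℝ, z 0 ∂(Measure.infinitePi (fun _ : ℕ => ν)) = ∫ x, x ∂ν := by
    conv_rhs => rw [← (hmp 0).map_eq]
    exact (integral_map (f := fun x : ℝ => x) (hmp 0).aemeasurable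
      measurable_id.aestronglyMeasurable).symm
  rwa [hmean] at hslln

theorem ou_mu_family_strictly_separated
    (t x₀ θ σ : ℝ) (ht : 0 < t) (hθ : 0 < θ) (hσ : 0 < σ)
    (P : ℝ → Measure (ℕ → ℝ))
    (hP : ∀ μ : ℝ, IsCountableProductOf (P μ)
      (gaussianReal (x₀ * Real.exp (-θ * t) + μ * (1 - Real.exp (-θ * t)))
        ((σ ^ 2 / (2 * θ) * (1 - Real.exp (-2 * θ * t))).toNNReal))) :
    ∃ Z : ℝ → Set (ℕ → ℝ),
      (∀ μ : ℝ, MeasurableSet (Z μ)) ∧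
      (∀ μ : ℝ, P μ (Z μ) = 1) ∧
      (∀ μ₁ μ₂ : ℝ, μ₁ ≠ μ₂ → Z μ₁ ∩ Z μ₂ = ∅) := by
  have hmeas : ∀ μ : ℝ, MeasurableSet {z : ℕ → ℝ |
      Tendsto (fun n : ℕ => (∑ i ∈ Finset.range n, z i) / (n : ℝ)) atTop
        (nhds (x₀ * Real.exp (-θ * t) + μ * (1 - Real.exp (-θ * t))))} := fun μ =>
    measurableSet_tendsto _ fun n => by fun_prop
  refine ⟨fun μ => {z : ℕ → ℝ |
      Tendsto (fun n : ℕ => (∑ i ∈ Finset.range n, z i) / (n : ℝ)) atTop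
        (nhds (x₀ * Real.exp (-θ * t) + μ * (1 - Real.exp (-θ * t))))},
    hmeas, fun μ => ?_, fun μ₁ μ₂ hne => ?_⟩
  · have := (hP μ).1
    rw [← prob_compl_eq_zero_iff (hmeas μ)]
    have hslln := (hP μ).ae_tendsto_mean
      ((memLp_id_gaussianReal 1).integrable le_rfl)
    rw [integral_id_gaussianReal] at hslln
    exact hslln
  · refine Set.eq_empty_of_forall_notMem fun z hz => hne ?_
    have hlim := tendsto_nhds_unique hz.1 hz.2
    have hpos : 0 < 1 - Real.exp (-θ * t) :=
      sub_pos.2 (Real.exp_lt_one_iff.2 (by nlinarith [mul_pos hθ ht]))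
    exact mul_right_cancel₀ hpos.ne' (add_left_cancel hlim)
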